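/- Non-Archimedean Big Picard theorem for nowhere-vanishing functions: let k be an algebraically closed field complete with respect to a nontrivial non-Archimedean absolute value, r ∈ |k*|, and let f = Σ_{n∈ℤ} aₙ zⁿ be a Laurent series convergent on the punctured disc {z : 0 < |z| ≤ r} (i.e., |aₙ| rⁿ → 0 as n → ∞ and |aₙ| tⁿ → 0 as n → −∞ for all t > 0). If f(z) ≠ 0 for all z with 0 < |z| ≤ r, then aₙ = 0 for all but finitely many negative n; that is, f is meromorphic at 0 with at worst a pole there. -/

import Mathlib

open Filter

/-!
Suppose that infinitely many negative powers of `z` occur in `f`, and let `a M * z ^ M` be the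
dominant term on `|z| = r`. Among the radii at which the terms of index `n < M` catch up with it,
there is a largest one, `s ≤ r`: there two terms tie for the maximum. After rescaling, `s = 1`. By
Gauss's lemma, all long enough truncations of the series have the same number `d ≥ 1` of roots on
the unit circle, and for `|z| = 1` their value is `|P z| = G * ∏ |z - x|`, with `x` running over
these roots and `G` the Gauss norm. At a root of one truncation the next one is small, hence has a
root nearby; the roots so chosen form a Cauchy sequence, and its limit is a zero of `f`.
-/

open Polynomial Topology

/-- The sequence `c` has maximal norm `G`, and `m` and `M` are the first and the last index where
it is attained. For the coefficients of a polynomial or Laurent series, `G` is the Gauss norm and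
`[m, M]` spans the horizontal side of the Newton polygon. -/
structure HasDominantRange {ι E : Type*} [Preorder ι] [Norm E] (c : ι → E) (G : ℝ) (m M : ι) :
    Prop where
  pos : 0 < G
  norm_le : ∀ i, ‖c i‖ ≤ G
  norm_first : ‖c m‖ = G
  norm_last : ‖c M‖ = G
  norm_lt : ∀ i ∉ Set.Icc m M, ‖c i‖ < G

namespace HasDominantRange

section Order

variable {ι E : Type*}

theorem mem_Icc [Preorder ι] [Norm E] {c : ι → E} {G : ℝ} {m M i : ι}
    (h : HasDominantRange c G m M) (hi : ‖c i‖ = G) : i ∈ Set.Icc m M := by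
  by_contra hmem
  exact (h.norm_lt i hmem).ne hi

theorem le [Preorder ι] [Norm E] {c : ι → E} {G : ℝ} {m M : ι} (h : HasDominantRange c G m M) :
    m ≤ M :=
  (h.mem_Icc h.norm_first).2

theorem unique [PartialOrder ι] [Norm E] {c : ι → E} {G G' : ℝ} {m m' M M' : ι}
    (h : HasDominantRange c G m M) (h' : HasDominantRange c G' m' M') :
    G = G' ∧ m = m' ∧ M = M' := by
  obtain rfl : G = G' :=
    le_antisymm (h.norm_first ▸ h'.norm_le m) (h'.norm_first ▸ h.norm_le m')
  exact ⟨rfl, le_antisymm (h.mem_Icc h'.norm_first).1 (h'.mem_Icc h.norm_first).1,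
    le_antisymm (h'.mem_Icc h.norm_last).2 (h.mem_Icc h'.norm_last).2⟩

theorem exists_of_tendsto_cofinite [LinearOrder ι] [NormedAddGroup E] {c : ι → E}
    (hc : Tendsto c cofinite (𝓝 0)) {i : ι} (hi : c i ≠ 0) (hmax : ∀ j, ‖c j‖ ≤ ‖c i‖) :
    ∃ m M, HasDominantRange c ‖c i‖ m M := by
  have hpos : 0 < ‖c i‖ := norm_pos_iff.2 hi
  have hfin : {j | ‖c j‖ = ‖c i‖}.Finite := by
    have hlt := (tendsto_zero_iff_norm_tendsto_zero.1 hc).eventually (gt_mem_nhds hpos)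
    exact (eventually_cofinite.1 hlt).subset fun j hj => not_lt.2 (ge_of_eq hj)
  obtain ⟨m, hm, hmin⟩ := Set.exists_min_image _ id hfin ⟨i, rfl⟩
  obtain ⟨M, hM, hmax'⟩ := Set.exists_max_image _ id hfin ⟨i, rfl⟩
  exact ⟨m, M, hpos, hmax, hm, hM, fun j hj =>
    (hmax j).lt_of_ne fun hji => hj ⟨hmin j hji, hmax' j hji⟩⟩

end Order

section Mul

variable {k : Type*} [NormedField k]

theorem ne_zero {P : k[X]} {G : ℝ} {p q : ℕ} (h : HasDominantRange P.coeff G p q) :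
    P ≠ 0 := by
  rintro rfl
  exact h.pos.ne (by simpa using h.norm_first)

theorem coeff_C {a : k} (ha : a ≠ 0) : HasDominantRange (C a).coeff ‖a‖ 0 0 where
  pos := norm_pos_iff.2 ha
  norm_le i := by rw [Polynomial.coeff_C]; split_ifs <;> simp
  norm_first := by simp
  norm_last := by simp
  norm_lt i hi := by
    rw [Polynomial.coeff_C, if_neg (by simpa using hi)]
    simpa using ha

theorem coeff_X_sub_C (x : k) :
    HasDominantRange (X - C x).coeff (max 1 ‖x‖) (if ‖x‖ < 1 then 1 else 0)
      ((if ‖x‖ < 1 then 1 else 0) + if ‖x‖ = 1 then 1 else 0) where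
  pos := by positivity
  norm_le i := by rcases i with _ | _ | i <;> simp [coeff_X, Polynomial.coeff_C]
  norm_first := by
    split_ifs with h
    · simp [h.le]
    · simpa using not_lt.1 h
  norm_last := by
    rcases lt_trichotomy ‖x‖ 1 with h | h | h
    · simp [h, h.ne, h.le]
    · simp [h]
    · simp [h.not_gt, h.ne', h.le]
  norm_lt i hi := by
    rcases i with _ | _ | i
    · have h : ‖x‖ < 1 := by by_contra h; simp [h] at hi
      simp [h]
    · have h : 1 < ‖x‖ := by
        by_contra! h
        rcases h.lt_or_eq with h | h
        · simp [h, h.ne] at hi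
        · simp [h] at hi
      simp [h]
    · simp [coeff_X]

variable [IsUltrametricDist k]

theorem coeff_mul {P Q : k[X]} {G G' : ℝ} {m m' M M' : ℕ} (hP : HasDominantRange P.coeff G m M)
    (hQ : HasDominantRange Q.coeff G' m' M') :
    HasDominantRange (P * Q).coeff (G * G') (m + m') (M + M') := by
  have hpos : 0 < G * G' := mul_pos hP.pos hQ.pos
  have term_le (i j : ℕ) : ‖P.coeff i * Q.coeff j‖ ≤ G * G' := by
    rw [norm_mul]
    exact mul_le_mul (hP.norm_le i) (hQ.norm_le j) (norm_nonneg _) hP.pos.le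
  have term_lt (i j : ℕ) (hij : i ∉ Set.Icc m M ∨ j ∉ Set.Icc m' M') :
      ‖P.coeff i * Q.coeff j‖ < G * G' := by
    rw [norm_mul]
    rcases hij with hi | hj
    · exact mul_lt_mul_of_lt_of_le_of_nonneg_of_pos (hP.norm_lt i hi) (hQ.norm_le j)
        (norm_nonneg _) hQ.pos
    · exact mul_lt_mul_of_le_of_lt_of_nonneg_of_pos (hP.norm_le i) (hQ.norm_lt j hj)
        (norm_nonneg _) hP.pos
  have norm_coeff_eq (i j : ℕ) (hi : ‖P.coeff i‖ = G) (hj : ‖Q.coeff j‖ = G')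
      (hcorner : ∀ i' j', i' + j' = i + j → (i', j') ≠ (i, j) →
        i' ∉ Set.Icc m M ∨ j' ∉ Set.Icc m' M') : ‖(P * Q).coeff (i + j)‖ = G * G' := by
    have hterm : ‖P.coeff i * Q.coeff j‖ = G * G' := by rw [norm_mul, hi, hj]
    rw [Polynomial.coeff_mul, ← hterm]
    refine IsUltrametricDist.isNonarchimedean_norm.apply_sum_eq_of_lt (k := (i, j))
      (fun a => (norm_neg a).symm) (by simp) fun p hp hne => ?_
    rw [hterm]
    exact term_lt _ _ (hcorner p.1 p.2 (Finset.HasAntidiagonal.mem_antidiagonal.1 hp) hne)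
  refine ⟨hpos, fun n => ?_, norm_coeff_eq m m' hP.norm_first hQ.norm_first ?_,
    norm_coeff_eq M M' hP.norm_last hQ.norm_last ?_, fun n hn => ?_⟩
  · rw [Polynomial.coeff_mul]
    exact IsUltrametricDist.norm_sum_le_of_forall_le_of_nonneg hpos.le fun p _ => term_le _ _
  · simp only [Set.mem_Icc, ne_eq, Prod.mk.injEq]
    omega
  · simp only [Set.mem_Icc, ne_eq, Prod.mk.injEq]
    omega
  · rw [Polynomial.coeff_mul]
    obtain ⟨p, hp, hle⟩ := IsUltrametricDist.exists_norm_finsetSum_le_of_nonempty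
      (t := Finset.HasAntidiagonal.antidiagonal n) ⟨(0, n), by simp⟩
      fun p => P.coeff p.1 * Q.coeff p.2
    refine hle.trans_lt (term_lt _ _ ?_)
    rw [Finset.HasAntidiagonal.mem_antidiagonal] at hp
    simp only [Set.mem_Icc] at hn ⊢
    omega

theorem coeff_prod_X_sub_C (s : Multiset k) :
    HasDominantRange (s.map (X - C ·)).prod.coeff (s.map (max 1 ‖·‖)).prod
      (s.countP (‖·‖ < 1)) (s.countP (‖·‖ < 1) + s.countP (‖·‖ = 1)) := by
  induction s using Multiset.induction_on with
  | empty => simpa using coeff_C (one_ne_zero (α := k))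
  | cons x s ih =>
    convert (coeff_X_sub_C x).coeff_mul ih using 1
    · simp
    · simp
    · rw [Multiset.countP_cons, add_comm]
    · rw [Multiset.countP_cons, Multiset.countP_cons]
      ring

end Mul

end HasDominantRange

section UnitCircle

variable {k : Type*} [NormedField k]

/-- The roots of `P` on the unit circle, with multiplicity. -/
noncomputable def unitCircleRoots (P : k[X]) : Multiset k :=
  P.roots.filter (‖·‖ = 1)

theorem norm_eq_one_of_mem_unitCircleRoots {P : k[X]} {x : k} (hx : x ∈ unitCircleRoots P) :
    ‖x‖ = 1 :=
  (Multiset.mem_filter.1 hx).2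

theorem eval_eq_zero_of_mem_unitCircleRoots {P : k[X]} {x : k} (hx : x ∈ unitCircleRoots P) :
    P.eval x = 0 :=
  (mem_roots'.1 (Multiset.mem_of_mem_filter hx)).2

variable [IsUltrametricDist k]

theorem prod_map_norm_sub {z : k} (hz : ‖z‖ = 1) (s : Multiset k) :
    (s.map (‖z - ·‖)).prod =
      (s.map (max 1 ‖·‖)).prod * ((s.filter (‖·‖ = 1)).map (‖z - ·‖)).prod := by
  induction s using Multiset.induction_on with
  | empty => simp
  | cons x s ih =>
    rw [Multiset.map_cons, Multiset.prod_cons, Multiset.map_cons, Multiset.prod_cons, ih]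
    by_cases hx : ‖x‖ = 1
    · rw [Multiset.filter_cons_of_pos (p := (‖·‖ = 1)) _ hx, Multiset.map_cons, Multiset.prod_cons,
        hx, max_self]
      ring
    · have hsub : ‖z - x‖ = max 1 ‖x‖ := by
        have hne : ‖z‖ ≠ ‖-x‖ := by rwa [hz, norm_neg, ne_comm]
        rw [sub_eq_add_neg, IsUltrametricDist.norm_add_eq_max_of_norm_ne_norm hne, hz, norm_neg]
      rw [Multiset.filter_cons_of_neg (p := (‖·‖ = 1)) _ hx, hsub, mul_assoc]

variable [IsAlgClosed k] {P : k[X]} {G : ℝ} {p q : ℕ}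

theorem hasDominantRange_coeff (hP : P ≠ 0) :
    HasDominantRange P.coeff (‖P.leadingCoeff‖ * (P.roots.map (max 1 ‖·‖)).prod)
      (P.roots.countP (‖·‖ < 1))
      (P.roots.countP (‖·‖ < 1) + Multiset.card (unitCircleRoots P)) := by
  have h := (HasDominantRange.coeff_C (leadingCoeff_ne_zero.2 hP)).coeff_mul
    (HasDominantRange.coeff_prod_X_sub_C P.roots)
  rwa [← (IsAlgClosed.splits P).eq_prod_roots, zero_add, zero_add,
    Multiset.countP_eq_card_filter (‖·‖ = 1)] at h

namespace HasDominantRange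

theorem add_card_unitCircleRoots (h : HasDominantRange P.coeff G p q) :
    p + Multiset.card (unitCircleRoots P) = q := by
  obtain ⟨-, rfl, rfl⟩ := h.unique (hasDominantRange_coeff h.ne_zero)
  rfl

theorem norm_eval_eq (h : HasDominantRange P.coeff G p q) {z : k} (hz : ‖z‖ = 1) :
    ‖P.eval z‖ = G * ((unitCircleRoots P).map (‖z - ·‖)).prod := by
  rw [(h.unique (hasDominantRange_coeff h.ne_zero)).1, mul_assoc, unitCircleRoots,
    ← prod_map_norm_sub hz, (IsAlgClosed.splits P).eval_eq_prod_roots, norm_mul]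
  congr 1
  rw [← normHom_apply, map_multiset_prod, Multiset.map_map]
  rfl

theorem exists_mem_unitCircleRoots_mul_pow_le (h : HasDominantRange P.coeff G p q) (hpq : p < q)
    {z : k} (hz : ‖z‖ = 1) :
    ∃ x ∈ unitCircleRoots P, G * ‖z - x‖ ^ (q - p) ≤ ‖P.eval z‖ := by
  have hcard := h.add_card_unitCircleRoots
  obtain ⟨x, hx, hmin⟩ := Multiset.exists_min_image (‖z - ·‖) (s := unitCircleRoots P)
    (Multiset.card_pos.1 (by omega))
  refine ⟨x, hx, ?_⟩
  rw [h.norm_eval_eq hz]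
  refine mul_le_mul_of_nonneg_left ?_ h.pos.le
  calc ‖z - x‖ ^ (q - p) = ((unitCircleRoots P).map fun _ => ‖z - x‖).prod := by
        rw [Multiset.map_const', Multiset.prod_replicate, ← hcard, Nat.add_sub_cancel_left]
    _ ≤ ((unitCircleRoots P).map (‖z - ·‖)).prod :=
        Multiset.prod_map_le_prod_map₀ _ _ (fun _ _ => norm_nonneg _) hmin

theorem norm_eval_le_mul_norm_sub (h : HasDominantRange P.coeff G p q) {x z : k}
    (hx : x ∈ unitCircleRoots P) (hz : ‖z‖ = 1) : ‖P.eval z‖ ≤ G * ‖z - x‖ := by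
  rw [h.norm_eval_eq hz]
  refine mul_le_mul_of_nonneg_left ?_ h.pos.le
  obtain ⟨s, hs⟩ := Multiset.exists_cons_of_mem hx
  have hle (y : k) (hy : y ∈ s) : ‖z - y‖ ≤ 1 := by
    have hy_norm := norm_eq_one_of_mem_unitCircleRoots (hs ▸ Multiset.mem_cons_of_mem hy)
    simpa [hz, hy_norm, ← sub_eq_add_neg] using IsUltrametricDist.norm_add_le_max z (-y)
  rw [hs, Multiset.map_cons, Multiset.prod_cons]
  refine mul_le_of_le_one_right (norm_nonneg _) ?_
  calc (s.map (‖z - ·‖)).prod ≤ (s.map fun _ => (1 : ℝ)).prod :=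
        Multiset.prod_map_le_prod_map₀ _ _ (fun _ _ => norm_nonneg _) hle
    _ = 1 := Multiset.prod_map_one

end HasDominantRange

end UnitCircle

section Truncation

variable {k : Type*}

/-- The Laurent polynomial `∑ j ∈ [l, u], b j X ^ j`, multiplied by `X ^ (-l)` so as to become a
polynomial. -/
noncomputable def truncation [Semiring k] (b : ℤ → k) (l u : ℤ) : k[X] :=
  ∑ j ∈ Finset.Icc l u, monomial (j - l).toNat (b j)

theorem truncation_coeff [Semiring k] (b : ℤ → k) (l u : ℤ) (i : ℕ) :
    (truncation b l u).coeff i = if l + i ≤ u then b (l + i) else 0 := by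
  have hiff : ∀ j ∈ Finset.Icc l u, ((j - l).toNat = i ↔ j = l + i) := fun j hj => by
    rw [Finset.mem_Icc] at hj
    omega
  simp only [truncation, finsetSum_coeff, coeff_monomial]
  rw [Finset.sum_congr rfl fun j hj => if_congr (hiff j hj) rfl rfl, Finset.sum_ite_eq']
  exact if_congr (by simp) rfl rfl

theorem zpow_mul_eval_truncation [Field k] (b : ℤ → k) (l u : ℤ) {z : k} (hz : z ≠ 0) :
    z ^ l * (truncation b l u).eval z = ∑ j ∈ Finset.Icc l u, b j * z ^ j := by
  rw [truncation, eval_finsetSum, Finset.mul_sum]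
  refine Finset.sum_congr rfl fun j hj => ?_
  have hj_nonneg : 0 ≤ j - l := sub_nonneg.2 (Finset.mem_Icc.1 hj).1
  rw [eval_monomial, mul_left_comm, ← zpow_natCast, Int.toNat_of_nonneg hj_nonneg,
    ← zpow_add₀ hz, add_sub_cancel]

theorem norm_eval_truncation [NormedField k] (b : ℤ → k) (l u : ℤ) {z : k} (hz : ‖z‖ = 1) :
    ‖(truncation b l u).eval z‖ = ‖∑ j ∈ Finset.Icc l u, b j * z ^ j‖ := by
  have hz0 : z ≠ 0 := norm_ne_zero_iff.1 (by rw [hz]; exact one_ne_zero)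
  rw [← zpow_mul_eval_truncation b l u hz0, norm_mul, norm_zpow, hz, one_zpow, one_mul]

theorem HasDominantRange.coeff_truncation [NormedField k] {b : ℤ → k} {G : ℝ} {m M l u : ℤ}
    (h : HasDominantRange b G m M) (hl : l ≤ m) (hu : M ≤ u) :
    HasDominantRange (truncation b l u).coeff G (m - l).toNat (M - l).toNat where
  pos := h.pos
  norm_le i := by
    rw [truncation_coeff]
    split_ifs
    · exact h.norm_le _
    · simpa using h.pos.le
  norm_first := by
    have hmM := h.le
    rw [truncation_coeff, if_pos (by omega), ← h.norm_first]
    congr 2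
    omega
  norm_last := by
    have hmM := h.le
    rw [truncation_coeff, if_pos (by omega), ← h.norm_last]
    congr 2
    omega
  norm_lt i hi := by
    rw [truncation_coeff]
    split_ifs
    · refine h.norm_lt _ ?_
      rw [Set.mem_Icc] at hi ⊢
      omega
    · simpa using h.pos

theorem norm_eval_truncation_succ_le [NormedField k] [IsUltrametricDist k] {b : ℤ → k} {l u : ℤ}
    (hlu : l ≤ u) {z : k} (hz : ‖z‖ = 1) (hroot : (truncation b l u).eval z = 0) :
    ‖(truncation b (l - 1) (u + 1)).eval z‖ ≤ max ‖b (l - 1)‖ ‖b (u + 1)‖ := by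
  have hsum : ∑ j ∈ Finset.Icc l u, b j * z ^ j = 0 := by
    rw [← norm_eq_zero, ← norm_eval_truncation b l u hz, hroot, norm_zero]
  have hIcc : Finset.Icc (l - 1) (u + 1) = insert (l - 1) (insert (u + 1) (Finset.Icc l u)) := by
    ext j
    simp only [Finset.mem_Icc, Finset.mem_insert]
    omega
  rw [norm_eval_truncation b _ _ hz, hIcc,
    Finset.sum_insert (by simp only [Finset.mem_Icc, Finset.mem_insert]; omega),
    Finset.sum_insert (by simp), hsum, add_zero]
  simpa [norm_mul, norm_zpow, hz] using
    IsUltrametricDist.norm_add_le_max (b (l - 1) * z ^ (l - 1)) (b (u + 1) * z ^ (u + 1))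

theorem tendsto_norm_eval_truncation [NormedField k] {b : ℤ → k} (m M : ℤ) {z : k}
    (hz : ‖z‖ = 1) (hsum : Summable fun n => b n * z ^ n) :
    Tendsto (fun n : ℕ => ‖(truncation b (m - n) (M + n)).eval z‖) atTop
      (𝓝 ‖∑' n, b n * z ^ n‖) := by
  have hIcc : Tendsto (fun n : ℕ => Finset.Icc (m - n) (M + n)) atTop atTop := by
    refine tendsto_atTop_finset_of_monotone
      (fun i j hij => Finset.Icc_subset_Icc (by omega) (by omega))
      fun j => ⟨(m - j).natAbs + (j - M).natAbs, ?_⟩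
    rw [Finset.mem_Icc]
    omega
  exact (hsum.hasSum.comp hIcc).norm.congr fun n => (norm_eval_truncation b _ _ hz).symm

end Truncation

theorem exists_tendsto_of_forall_exists_norm_sub_le {E : Type*} [SeminormedAddCommGroup E]
    [IsUltrametricDist E] [CompleteSpace E] {S : ℕ → Set E} {δ : ℕ → ℝ} (hS : (S 0).Nonempty)
    (hδ : Tendsto δ atTop (𝓝 0)) (hstep : ∀ n, ∀ x ∈ S n, ∃ y ∈ S (n + 1), ‖y - x‖ ≤ δ n) :
    ∃ u : ℕ → E, ∃ x, (∀ n, u n ∈ S n) ∧ Tendsto u atTop (𝓝 x) := by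
  obtain ⟨x₀, hx₀⟩ := hS
  choose! next hnext_mem hnext_le using hstep
  let u (n : ℕ) : E := n.rec x₀ next
  have hu (n : ℕ) : u n ∈ S n := by
    induction n with
    | zero => exact hx₀
    | succ n ih => exact hnext_mem n _ ih
  have hsub : Tendsto (fun n => u (n + 1) - u n) atTop (𝓝 0) :=
    squeeze_zero_norm (fun n => hnext_le n _ (hu n)) hδ
  obtain ⟨x, hx⟩ := cauchySeq_tendsto_of_complete
    (NonarchimedeanAddGroup.cauchySeq_of_tendsto_sub_nhds_zero hsub)
  exact ⟨u, x, hu, hx⟩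

section LaurentZeros

variable {k : Type*} [NormedField k] [IsAlgClosed k] [IsUltrametricDist k] {b : ℤ → k}
  {G : ℝ} {m M : ℤ}

theorem HasDominantRange.exists_mem_unitCircleRoots_truncation (h : HasDominantRange b G m M)
    (hmM : m < M) {l u : ℤ} (hl : l ≤ m) (hu : M ≤ u) {z : k} (hz : ‖z‖ = 1) :
    ∃ x ∈ unitCircleRoots (truncation b l u),
      ‖x - z‖ ≤ (‖(truncation b l u).eval z‖ / G) ^ ((M - m : ℝ)⁻¹) := by
  have hP := h.coeff_truncation hl hu
  obtain ⟨x, hx, hle⟩ := hP.exists_mem_unitCircleRoots_mul_pow_le (by omega) hz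
  have hpos : (0 : ℝ) < M - m := sub_pos.2 (Int.cast_lt.2 hmM)
  have hdeg : (((M - l).toNat - (m - l).toNat : ℕ) : ℝ) = M - m := by
    have : (((M - l).toNat - (m - l).toNat : ℕ) : ℤ) = M - m := by omega
    exact_mod_cast congrArg (Int.cast (R := ℝ)) this
  refine ⟨x, hx, ?_⟩
  rw [Real.le_rpow_inv_iff_of_pos (norm_nonneg _) (div_nonneg (norm_nonneg _) h.pos.le) hpos,
    ← hdeg, Real.rpow_natCast, le_div_iff₀' h.pos, norm_sub_rev]
  exact hle

variable [CompleteSpace k]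

theorem HasDominantRange.exists_tendsto_unitCircleRoots_truncation (h : HasDominantRange b G m M)
    (hb : Tendsto b cofinite (𝓝 0)) (hmM : m < M) :
    ∃ u : ℕ → k, ∃ z, (∀ n : ℕ, u n ∈ unitCircleRoots (truncation b (m - n) (M + n))) ∧
      Tendsto u atTop (𝓝 z) := by
  let e (n : ℕ) : ℝ := max ‖b (m - n - 1)‖ ‖b (M + n + 1)‖
  have norm_b_comp_tendsto {g : ℕ → ℤ} (hg : g.Injective) :
      Tendsto (fun n => ‖b (g n)‖) atTop (𝓝 0) :=
    tendsto_zero_iff_norm_tendsto_zero.1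
      (hb.comp (Nat.cofinite_eq_atTop ▸ hg.tendsto_cofinite))
  have he : Tendsto e atTop (𝓝 0) := by
    simpa using (norm_b_comp_tendsto (g := fun n => m - n - 1) fun i j hij => by grind).max
      (norm_b_comp_tendsto (g := fun n => M + n + 1) fun i j hij => by grind)
  have hexp : (0 : ℝ) < (M - m : ℝ)⁻¹ := inv_pos.2 (sub_pos.2 (Int.cast_lt.2 hmM))
  have hδ : Tendsto (fun n => (e n / G) ^ ((M - m : ℝ)⁻¹)) atTop (𝓝 0) := by
    simpa [Real.zero_rpow hexp.ne'] using (he.div_const G).rpow_const (.inr hexp.le)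
  refine exists_tendsto_of_forall_exists_norm_sub_le
    (S := fun n => {x | x ∈ unitCircleRoots (truncation b (m - n) (M + n))}) ?_ hδ fun n x hx => ?_
  · obtain ⟨x, hx, -⟩ := h.exists_mem_unitCircleRoots_truncation hmM (l := m - (0 : ℕ))
      (u := M + (0 : ℕ)) (by simp) (by simp) norm_one
    exact ⟨x, hx⟩
  · have hx_norm := norm_eq_one_of_mem_unitCircleRoots hx
    obtain ⟨y, hy, hle⟩ := h.exists_mem_unitCircleRoots_truncation hmM (l := m - n - 1)
      (u := M + n + 1) (by omega) (by omega) hx_norm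
    refine ⟨y, ?_, hle.trans ?_⟩
    · rwa [Set.mem_ofPred_eq, Nat.cast_succ, ← sub_sub, ← add_assoc]
    · have := h.pos
      gcongr
      exact norm_eval_truncation_succ_le (by omega) hx_norm
        (eval_eq_zero_of_mem_unitCircleRoots hx)

theorem HasDominantRange.exists_norm_eq_one_and_tsum_eq_zero (h : HasDominantRange b G m M)
    (hb : Tendsto b cofinite (𝓝 0)) (hmM : m < M) :
    ∃ z : k, ‖z‖ = 1 ∧ ∑' n, b n * z ^ n = 0 := by
  obtain ⟨u, z, hu, hz⟩ := h.exists_tendsto_unitCircleRoots_truncation hb hmM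
  have hz_norm : ‖z‖ = 1 :=
    tendsto_nhds_unique hz.norm
      (tendsto_const_nhds.congr fun n => (norm_eq_one_of_mem_unitCircleRoots (hu n)).symm)
  refine ⟨z, hz_norm, ?_⟩
  have hsummable : Summable fun n => b n * z ^ n := by
    refine NonarchimedeanAddGroup.summable_of_tendsto_cofinite_zero ?_
    rw [tendsto_zero_iff_norm_tendsto_zero] at hb ⊢
    simpa [hz_norm] using hb
  have htsum := tendsto_norm_eval_truncation m M hz_norm hsummable
  have hzero : Tendsto (fun n : ℕ => ‖(truncation b (m - n) (M + n)).eval z‖) atTop (𝓝 0) := by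
    have hsub : Tendsto (fun n => G * ‖z - u n‖) atTop (𝓝 0) := by
      simpa using ((tendsto_const_nhds (x := z)).sub hz).norm.const_mul G
    refine squeeze_zero (fun n => norm_nonneg _) (fun n => ?_) hsub
    have hn := h.coeff_truncation (sub_le_self m n.cast_nonneg)
      (le_add_of_nonneg_right n.cast_nonneg)
    exact hn.norm_eval_le_mul_norm_sub (hu n) hz_norm
  exact norm_eq_zero.1 (tendsto_nhds_unique htsum hzero)

theorem exists_norm_eq_and_tsum_eq_zero {a : ℤ → k} {x : k} (hx : x ≠ 0)
    (ha : Tendsto (fun n => ‖a n‖ * ‖x‖ ^ n) cofinite (𝓝 0)) (hM : a M ≠ 0)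
    (hmax : ∀ n, ‖a n‖ * ‖x‖ ^ n ≤ ‖a M‖ * ‖x‖ ^ M) (hmM : m ≠ M)
    (htie : ‖a m‖ * ‖x‖ ^ m = ‖a M‖ * ‖x‖ ^ M) :
    ∃ z : k, ‖z‖ = ‖x‖ ∧ ∑' n, a n * z ^ n = 0 := by
  simp only [← norm_zpow, ← norm_mul] at ha hmax htie
  have hb := tendsto_zero_iff_norm_tendsto_zero.2 ha
  obtain ⟨m', M', h⟩ := HasDominantRange.exists_of_tendsto_cofinite hb
    (mul_ne_zero hM (zpow_ne_zero M hx)) hmax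
  have hlt : m' < M' := by
    have hm_mem := h.mem_Icc htie
    have hM_mem := h.mem_Icc rfl
    rw [Set.mem_Icc] at hm_mem hM_mem
    omega
  obtain ⟨z, hz, hsum⟩ := h.exists_norm_eq_one_and_tsum_eq_zero hb hlt
  refine ⟨x * z, by rw [norm_mul, hz, mul_one], ?_⟩
  simpa only [mul_zpow, mul_assoc] using hsum

end LaurentZeros

theorem pos_of_mul_zpow_le {x y s : ℝ} {m n : ℤ} (hs : 0 < s) (hx : 0 < x)
    (h : x * s ^ m ≤ y * s ^ n) : 0 < y :=
  pos_of_mul_pos_left ((mul_pos hx (zpow_pos hs m)).trans_le h) (zpow_pos hs n).le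

theorem exists_forall_le_of_eventually_cofinite_le {ι α : Type*} [LinearOrder α] {f : ι → α}
    {i : ι} (hf : ∀ᶠ j in cofinite, f j ≤ f i) : ∃ j, ∀ i, f i ≤ f j := by
  let : TopologicalSpace ι := ⊥
  have : DiscreteTopology ι := ⟨rfl⟩
  let : TopologicalSpace α := Preorder.topology α
  have : OrderTopology α := ⟨rfl⟩
  exact continuous_of_discreteTopology.exists_forall_ge' i (by rwa [cocompact_eq_cofinite])

section CrossingRadius

/-- The radius at which the terms of index `n` and `M` of the series `∑ v j s ^ j` are equal. For
`n < M` the term of index `n` dominates below this radius, and that of index `M` above it. -/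
noncomputable def crossingRadius (v : ℤ → ℝ) (M n : ℤ) : ℝ :=
  (v n / v M) ^ ((M - n : ℝ)⁻¹)

variable {v : ℤ → ℝ} {M n : ℤ} {s : ℝ}

theorem le_crossingRadius_iff (hn : 0 ≤ v n) (hM : 0 < v M) (hnM : n < M) (hs : 0 < s) :
    s ≤ crossingRadius v M n ↔ v M * s ^ M ≤ v n * s ^ n := by
  rw [crossingRadius, Real.le_rpow_inv_iff_of_pos hs.le (div_nonneg hn hM.le)
    (sub_pos.2 (Int.cast_lt.2 hnM)), ← Int.cast_sub, Real.rpow_intCast, zpow_sub₀ hs.ne',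
    div_le_div_iff₀ (zpow_pos hs n) hM, mul_comm]

theorem crossingRadius_le_iff (hn : 0 ≤ v n) (hM : 0 < v M) (hnM : n < M) (hs : 0 < s) :
    crossingRadius v M n ≤ s ↔ v n * s ^ n ≤ v M * s ^ M := by
  rw [crossingRadius, Real.rpow_inv_le_iff_of_pos (div_nonneg hn hM.le) hs.le
    (sub_pos.2 (Int.cast_lt.2 hnM)), ← Int.cast_sub, Real.rpow_intCast, zpow_sub₀ hs.ne',
    div_le_div_iff₀ hM (zpow_pos hs n), mul_comm (s ^ M)]

theorem mul_zpow_le_mul_zpow_of_le_radius {r : ℝ} (hn : 0 ≤ v n) (hMn : M ≤ n) (hs : 0 < s)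
    (hsr : s ≤ r) (hr : v n * r ^ n ≤ v M * r ^ M) : v n * s ^ n ≤ v M * s ^ M := by
  have hr_pos : 0 < r := hs.trans_le hsr
  have hratio : s / r ≤ 1 := (div_le_one hr_pos).2 hsr
  have hsplit (j : ℤ) : v j * s ^ j = v j * r ^ j * (s / r) ^ j := by
    rw [mul_assoc, ← mul_zpow, mul_div_cancel₀ s hr_pos.ne']
  rw [hsplit n, hsplit M]
  exact mul_le_mul hr (zpow_le_zpow_right_of_le_one₀ (div_pos hs hr_pos) hratio hMn)
    (by positivity) ((mul_nonneg hn (zpow_pos hr_pos n).le).trans hr)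

theorem exists_radius_tie {r : ℝ} {q : ℤ} (hv : ∀ n, 0 ≤ v n) (hr : 0 < r)
    (hconv : ∀ s, 0 < s → s ≤ r → Tendsto (fun n => v n * s ^ n) cofinite (𝓝 0))
    (hmax : ∀ n, v n * r ^ n ≤ v M * r ^ M) (hqM : q < M) (hq : 0 < v q) :
    ∃ m < M, ∃ s, 0 < s ∧ s ≤ r ∧ v m * s ^ m = v M * s ^ M ∧
      ∀ n, v n * s ^ n ≤ v M * s ^ M := by
  have hM : 0 < v M := pos_of_mul_zpow_le hr hq (hmax q)
  have radius_le (n : ℤ) (hn : n < M) : crossingRadius v M n ≤ r :=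
    (crossingRadius_le_iff (hv n) hM hn hr).2 (hmax n)
  have hq_pos : 0 < crossingRadius v M q := Real.rpow_pos_of_pos (div_pos hq hM) _
  have eventually_le : ∀ᶠ n in cofinite, n < M → crossingRadius v M n ≤ crossingRadius v M q := by
    filter_upwards [(hconv _ hq_pos (radius_le q hqM)).eventually
      (ge_mem_nhds (mul_pos hM (zpow_pos hq_pos M)))] with n hn hnM
    exact (crossingRadius_le_iff (hv n) hM hnM hq_pos).2 hn
  obtain ⟨⟨m, hmM⟩, hm⟩ := exists_forall_le_of_eventually_cofinite_le
    (f := fun n : {n // n < M} => crossingRadius v M n) (i := ⟨q, hqM⟩)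
    ((Subtype.val_injective.tendsto_cofinite.eventually eventually_le).mono fun n hn => hn n.2)
  have hs_pos : 0 < crossingRadius v M m := hq_pos.trans_le (hm ⟨q, hqM⟩)
  refine ⟨m, hmM, crossingRadius v M m, hs_pos, radius_le m hmM,
    le_antisymm ((crossingRadius_le_iff (hv m) hM hmM hs_pos).1 le_rfl)
      ((le_crossingRadius_iff (hv m) hM hmM hs_pos).1 le_rfl), fun n => ?_⟩
  rcases lt_or_ge n M with hnM | hMn
  · exact (crossingRadius_le_iff (hv n) hM hnM hs_pos).1 (hm ⟨n, hnM⟩)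
  · exact mul_zpow_le_mul_zpow_of_le_radius (hv n) hMn hs_pos (radius_le m hmM) (hmax n)

end CrossingRadius

theorem exists_norm_eq_of_norm_mul_zpow_eq {k : Type*} [NormedField k] [IsAlgClosed k] {α β : k}
    {m M : ℤ} {s : ℝ} (hβ : β ≠ 0) (hmM : m < M) (hs : 0 < s)
    (htie : ‖α‖ * s ^ m = ‖β‖ * s ^ M) : ∃ x : k, ‖x‖ = s := by
  have hd : 0 < (M - m).toNat := by omega
  obtain ⟨x, hx⟩ := IsAlgClosed.exists_pow_nat_eq (α / β) hd
  refine ⟨x, (pow_left_inj₀ (norm_nonneg x) hs.le hd.ne').1 ?_⟩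
  rw [← norm_pow, hx, norm_div, ← zpow_natCast, Int.toNat_of_nonneg (by omega), zpow_sub₀ hs.ne',
    div_eq_div_iff (norm_ne_zero_iff.2 hβ) (zpow_pos hs m).ne', htie, mul_comm]

theorem tendsto_int_cofinite_iff {α : Type*} {l : Filter α} {g : ℤ → α} :
    Tendsto g cofinite l ↔
      Tendsto (fun n : ℕ => g n) atTop l ∧ Tendsto (fun n : ℕ => g (-n)) atTop l := by
  rw [Int.cofinite_eq, tendsto_sup, and_comm, ← map_neg_atTop, ← Nat.map_cast_int_atTop,
    tendsto_map'_iff, map_map, tendsto_map'_iff]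
  rfl

theorem tendsto_mul_zpow_cofinite {v : ℤ → ℝ} {r s : ℝ} (hv : ∀ n, 0 ≤ v n) (hs : 0 < s)
    (hsr : s ≤ r) (hpos : Tendsto (fun n : ℕ => v n * r ^ n) atTop (𝓝 0))
    (hneg : Tendsto (fun n : ℕ => v (-n) * s ^ (-n : ℤ)) atTop (𝓝 0)) :
    Tendsto (fun n => v n * s ^ n) cofinite (𝓝 0) := by
  refine tendsto_int_cofinite_iff.2 ⟨?_, hneg⟩
  simp only [zpow_natCast]
  exact squeeze_zero (fun n => mul_nonneg (hv n) (pow_nonneg hs.le n))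
    (fun n => mul_le_mul_of_nonneg_left (pow_le_pow_left₀ hs.le hsr n) (hv n)) hpos

theorem zero_free_meromorphic_at_origin_general {k : Type*} [NormedField k] [IsAlgClosed k]
    [CompleteSpace k] [IsUltrametricDist k] {a : ℤ → k} {r : ℝ} (hr : 0 < r)
    (hpos : Tendsto (fun n : ℕ => ‖a n‖ * r ^ n) atTop (𝓝 0))
    (hneg : ∀ t : ℝ, 0 < t → Tendsto (fun n : ℕ => ‖a (-n)‖ * t ^ (-n : ℤ)) atTop (𝓝 0))
    (hzf : ∀ z : k, z ≠ 0 → ‖z‖ ≤ r → ∑' n : ℤ, a n * z ^ n ≠ 0) :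
    {n : ℤ | n < 0 ∧ a n ≠ 0}.Finite := by
  by_contra hinf
  have hconv (s : ℝ) (hs : 0 < s) (hsr : s ≤ r) :
      Tendsto (fun n => ‖a n‖ * s ^ n) cofinite (𝓝 0) :=
    tendsto_mul_zpow_cofinite (fun n => norm_nonneg (a n)) hs hsr hpos (hneg s hs)
  obtain ⟨p, -, hp⟩ := Set.Infinite.nonempty hinf
  obtain ⟨M, hmax⟩ := exists_forall_le_of_eventually_cofinite_le <|
    (hconv r hr le_rfl).eventually
      (ge_mem_nhds (mul_pos (norm_pos_iff.2 hp) (zpow_pos hr p)))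
  obtain ⟨q, ⟨-, hq⟩, hqM⟩ : ∃ q ∈ {n : ℤ | n < 0 ∧ a n ≠ 0}, q < M := by
    by_contra! hM
    exact hinf ((Set.finite_Ico M 0).subset fun n hn => ⟨hM n hn, hn.1⟩)
  obtain ⟨m, hmM, s, hs, hsr, htie, hle⟩ := exists_radius_tie (fun n => norm_nonneg (a n)) hr hconv
    hmax hqM (norm_pos_iff.2 hq)
  have hM : a M ≠ 0 := norm_pos_iff.1 (pos_of_mul_zpow_le hr (norm_pos_iff.2 hq) (hmax q))
  obtain ⟨x, rfl⟩ := exists_norm_eq_of_norm_mul_zpow_eq hM hmM hs htie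
  obtain ⟨z, hz, hsum⟩ := exists_norm_eq_and_tsum_eq_zero (norm_pos_iff.1 hs) (hconv _ hs hsr) hM
    hle hmM.ne htie
  exact hzf z (norm_pos_iff.1 (hz ▸ hs)) (hz ▸ hsr) hsum

/-- Big Picard for nowhere-vanishing functions: a Laurent series analytic and
zero-free on the punctured disc `0 < |z| ≤ r` has only finitely many nonzero
coefficients of negative index, i.e. it is meromorphic at `0` with at worst a
pole there. -/
theorem zero_free_meromorphic_at_origin
    (k : Type*) [NontriviallyNormedField k] [IsAlgClosed k] [CompleteSpace k]
    [IsUltrametricDist k]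
    (a : ℤ → k) (c : k) (hc : c ≠ 0) (r : ℝ) (hr : r = ‖c‖)
    (hpos : Tendsto (fun n : ℕ => ‖a (n : ℤ)‖ * r ^ (n : ℕ)) atTop (nhds 0))
    (hneg : ∀ t : ℝ, 0 < t →
      Tendsto (fun n : ℕ => ‖a (-(n : ℤ))‖ * t ^ (-(n : ℤ))) atTop (nhds 0))
    (hzf : ∀ z : k, z ≠ 0 → ‖z‖ ≤ r → ∑' n : ℤ, a n * z ^ n ≠ 0) :
    {n : ℤ | n < 0 ∧ a n ≠ 0}.Finite :=
  zero_free_meromorphic_at_origin_general (hr ▸ norm_pos_iff.2 hc) hpos hneg hzf
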